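/- Let g be a ℤ-graded Lie algebra over ℂ satisfying (P1) and (P2), and let a ∈ g_{−1} be nonzero. Then [p^a, p^a] ∩ g_0 = [a, g_1], i.e. the intersection of the derived algebra of p^a with g_0 equals the span of the brackets [a, x] with x ∈ g_1. -/

import Mathlib

namespace Paper

variable {L : Type*} [LieRing L] [LieAlgebra ℂ L]

/-- A `ℤ`-graded Lie algebra over `ℂ`: a Lie algebra `L` together with an internal
direct sum decomposition `L = ⊕_{j ∈ ℤ} g_j` with `⁅g_i, g_j⁆ ⊆ g_{i+j}`. -/
structure GradedLie (L : Type*) [LieRing L] [LieAlgebra ℂ L] where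
  g : ℤ → Submodule ℂ L
  internal : DirectSum.IsInternal g
  bracket_mem : ∀ i j : ℤ, ∀ x ∈ g i, ∀ y ∈ g j, ⁅x, y⁆ ∈ g (i + j)

/-- Property (P1): `g₀` is commutative. -/
def P1 (G : GradedLie L) : Prop := ∀ x ∈ G.g 0, ∀ y ∈ G.g 0, ⁅x, y⁆ = (0 : L)

/-- Property (P2): if `a ∈ g_{-k}` (`k > 0`) and `⁅a, g₁⁆ = 0` then `a = 0`. -/
def P2 (G : GradedLie L) : Prop :=
  ∀ k : ℤ, 0 < k → ∀ a ∈ G.g (-k), (∀ x ∈ G.g 1, ⁅a, x⁆ = (0 : L)) → a = 0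

/-- A parabolic subalgebra of a graded Lie algebra, given by its graded pieces:
`p_j ⊆ g_j`, `p_j = g_j` for `j ≥ 0`, `p_j ≠ 0` for some `j < 0`, and `p` is
closed under the bracket. -/
def IsParabolic (G : GradedLie L) (p : ℤ → Submodule ℂ L) : Prop :=
  (∀ j, p j ≤ G.g j) ∧ (∀ j, 0 ≤ j → p j = G.g j) ∧
  (∃ j, j < 0 ∧ p j ≠ ⊥) ∧
  (∀ i j : ℤ, ∀ x ∈ p i, ∀ y ∈ p j, ⁅x, y⁆ ∈ p (i + j))

/-- Iterated brackets `[x_n, [⋯ [x_1, a] ⋯]]` with all `x_i ∈ g₀`. -/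
def iterSet (G : GradedLie L) (a : L) : ℕ → Set L
  | 0 => {a}
  | n + 1 => {v | ∃ x ∈ G.g 0, ∃ z ∈ iterSet G a n, v = ⁅x, z⁆}

/-- `p^a_{-1}`: the span of all iterated brackets of `g₀`-elements with `a`. -/
noncomputable def paMinusOne (G : GradedLie L) (a : L) : Submodule ℂ L :=
  Submodule.span ℂ (⋃ n : ℕ, iterSet G a n)

/-- Span of all brackets of elements of two subspaces. -/
noncomputable def bracketSpan (A B : Submodule ℂ L) : Submodule ℂ L :=
  Submodule.span ℂ {v | ∃ x ∈ A, ∃ y ∈ B, v = ⁅x, y⁆}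

/-- The negative graded pieces of `p^a`: `paNeg G a k = p^a_{-(k+1)}`, i.e.
`p^a_{-k-1} = ⁅p^a_{-1}, p^a_{-k}⁆` (as spans). -/
noncomputable def paNeg (G : GradedLie L) (a : L) : ℕ → Submodule ℂ L
  | 0 => paMinusOne G a
  | k + 1 => bracketSpan (paMinusOne G a) (paNeg G a k)

/-- The minimal parabolic family `p^a` attached to `a ∈ g_{-1}`:
`p^a_j = g_j` for `j ≥ 0` and the iterated bracket spans in negative degrees. -/
noncomputable def pa (G : GradedLie L) (a : L) (j : ℤ) : Submodule ℂ L :=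
  if 0 ≤ j then G.g j else paNeg G a ((-j).toNat - 1)

/-!
Since `p^a` is graded, `[p^a, p^a] ∩ g₀` is the sum of the `[p^a_i, p^a_{-i}]`. The Jacobi identity
`[[A, B], C] ⊆ [A, [B, C]] + [B, [A, C]]` for spans of brackets of subspaces puts each summand into
`[g₀, g₀] + [a, g₁]`: induction on the number of `g₀`-brackets applied to `a` treats
`[p^a_{-1}, g₁]`, and induction on `k` then treats `[p^a_{-k-1}, g_{k+1}]`.
Commutativity of `g₀` removes the term `[g₀, g₀]`.
-/

theorem bracketSpan_le {A B C : Submodule ℂ L} :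
    bracketSpan A B ≤ C ↔ ∀ x ∈ A, ∀ y ∈ B, ⁅x, y⁆ ∈ C := by
  refine Submodule.span_le.trans ⟨fun h x hx y hy => h ⟨x, hx, y, hy, rfl⟩, ?_⟩
  rintro h _ ⟨x, hx, y, hy, rfl⟩
  exact h x hx y hy

theorem lie_mem_bracketSpan {A B : Submodule ℂ L} {x y : L} (hx : x ∈ A) (hy : y ∈ B) :
    ⁅x, y⁆ ∈ bracketSpan A B :=
  Submodule.subset_span ⟨x, hx, y, hy, rfl⟩

theorem bracketSpan_eq_map₂ (A B : Submodule ℂ L) :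
    bracketSpan A B = Submodule.map₂ (LieModule.toEnd ℂ L L : L →ₗ[ℂ] L →ₗ[ℂ] L) A B :=
  le_antisymm (bracketSpan_le.2 fun _ hx _ hy => Submodule.apply_mem_map₂ _ hx hy)
    (Submodule.map₂_le.2 fun _ hx _ hy => lie_mem_bracketSpan hx hy)

theorem bracketSpan_mono {A A' B B' : Submodule ℂ L} (hA : A ≤ A') (hB : B ≤ B') :
    bracketSpan A B ≤ bracketSpan A' B' :=
  bracketSpan_le.2 fun _ hx _ hy => lie_mem_bracketSpan (hA hx) (hB hy)

theorem bracketSpan_comm (A B : Submodule ℂ L) : bracketSpan A B = bracketSpan B A := by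
  have bracketSpan_le_swap (A B : Submodule ℂ L) : bracketSpan A B ≤ bracketSpan B A :=
    bracketSpan_le.2 fun x hx y hy => by
      rw [← lie_skew]
      exact neg_mem (lie_mem_bracketSpan hy hx)
  exact le_antisymm (bracketSpan_le_swap A B) (bracketSpan_le_swap B A)

theorem bracketSpan_iSup_left {ι : Sort*} (A : ι → Submodule ℂ L) (B : Submodule ℂ L) :
    bracketSpan (⨆ i, A i) B = ⨆ i, bracketSpan (A i) B := by
  simp only [bracketSpan_eq_map₂, Submodule.map₂_iSup_left]

theorem bracketSpan_iSup_right {ι : Sort*} (A : Submodule ℂ L) (B : ι → Submodule ℂ L) :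
    bracketSpan A (⨆ i, B i) = ⨆ i, bracketSpan A (B i) := by
  simp only [bracketSpan_eq_map₂, Submodule.map₂_iSup_right]

theorem bracketSpan_span_span (s t : Set L) :
    bracketSpan (Submodule.span ℂ s) (Submodule.span ℂ t) =
      Submodule.span ℂ {v | ∃ x ∈ s, ∃ y ∈ t, v = ⁅x, y⁆} := by
  rw [bracketSpan_eq_map₂, Submodule.map₂_span_span]
  congr 1
  ext v
  simp [Set.mem_image2, eq_comm]

theorem bracketSpan_span_singleton_left (a : L) (B : Submodule ℂ L) :
    bracketSpan (Submodule.span ℂ {a}) B = Submodule.span ℂ {y | ∃ x ∈ B, y = ⁅a, x⁆} := by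
  simpa using bracketSpan_span_span {a} (B : Set L)

theorem bracketSpan_bracketSpan_le (A B C : Submodule ℂ L) :
    bracketSpan (bracketSpan A B) C ≤
      bracketSpan A (bracketSpan B C) ⊔ bracketSpan B (bracketSpan A C) := by
  have eq_span := bracketSpan_span_span {v | ∃ x ∈ A, ∃ y ∈ B, v = ⁅x, y⁆} (C : Set L)
  rw [Submodule.span_eq] at eq_span
  refine eq_span.le.trans (Submodule.span_le.2 ?_)
  rintro _ ⟨_, ⟨x, hx, y, hy, rfl⟩, z, hz, rfl⟩
  rw [lie_lie]
  exact Submodule.sub_mem_sup (lie_mem_bracketSpan hx (lie_mem_bracketSpan hy hz))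
    (lie_mem_bracketSpan hy (lie_mem_bracketSpan hx hz))

section Grading

variable (G : GradedLie L)

theorem P1.bracketSpan_eq_bot {G : GradedLie L} (hP1 : P1 G) :
    bracketSpan (G.g 0) (G.g 0) = ⊥ :=
  le_bot_iff.1 (bracketSpan_le.2 hP1)

theorem bracketSpan_le_g {A B : Submodule ℂ L} {i j k : ℤ} (hA : A ≤ G.g i) (hB : B ≤ G.g j)
    (hk : i + j = k) : bracketSpan A B ≤ G.g k :=
  hk ▸ bracketSpan_le.2 fun x hx y hy => G.bracket_mem i j x (hA hx) y (hB hy)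

theorem bracketSpan_iSup_inf_g {p q : ℤ → Submodule ℂ L} (hp : ∀ j, p j ≤ G.g j)
    (hq : ∀ j, q j ≤ G.g j) (m : ℤ) :
    bracketSpan (⨆ j, p j) (⨆ j, q j) ⊓ G.g m = ⨆ i, bracketSpan (p i) (q (m - i)) := by
  set S := ⨆ i, bracketSpan (p i) (q (m - i))
  have S_le_g : S ≤ G.g m :=
    iSup_le fun i => bracketSpan_le_g G (hp i) (hq (m - i)) (add_sub_cancel i m)
  apply le_antisymm
  · have le_sup_other_degrees :
        bracketSpan (⨆ j, p j) (⨆ j, q j) ≤ S ⊔ ⨆ k, ⨆ (_ : k ≠ m), G.g k := by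
      simp only [bracketSpan_iSup_left, bracketSpan_iSup_right]
      refine iSup₂_le fun j i => ?_
      by_cases hij : i + j = m
      · obtain rfl : j = m - i := by omega
        exact le_sup_of_le_left (le_iSup (fun i => bracketSpan (p i) (q (m - i))) i)
      · exact le_sup_of_le_right <|
          le_iSup₂_of_le (i + j) hij (bracketSpan_le_g G (hp i) (hq j) rfl)
    calc bracketSpan (⨆ j, p j) (⨆ j, q j) ⊓ G.g m
      _ ≤ (S ⊔ ⨆ k, ⨆ (_ : k ≠ m), G.g k) ⊓ G.g m := inf_le_inf_right _ le_sup_other_degrees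
      _ = S ⊔ (⨆ k, ⨆ (_ : k ≠ m), G.g k) ⊓ G.g m := sup_inf_assoc_of_le _ S_le_g
      _ = S := by rw [(G.internal.submodule_iSupIndep m).symm.eq_bot, sup_bot_eq]
  · exact le_inf (iSup_le fun i => bracketSpan_mono (le_iSup p i) (le_iSup q (m - i))) S_le_g

end Grading

section MinimalParabolic

variable (G : GradedLie L) (a : L)

theorem span_iterSet_succ (n : ℕ) :
    Submodule.span ℂ (iterSet G a (n + 1)) =
      bracketSpan (G.g 0) (Submodule.span ℂ (iterSet G a n)) := by
  simpa [iterSet] using (bracketSpan_span_span (G.g 0 : Set L) (iterSet G a n)).symm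

theorem paMinusOne_eq_iSup : paMinusOne G a = ⨆ n, Submodule.span ℂ (iterSet G a n) :=
  Submodule.span_iUnion _

theorem mem_paMinusOne_self : a ∈ paMinusOne G a :=
  Submodule.subset_span (Set.mem_iUnion.2 ⟨0, rfl⟩)

theorem pa_of_nonneg {j : ℤ} (hj : 0 ≤ j) : pa G a j = G.g j := if_pos hj

theorem pa_neg_succ (k : ℕ) : pa G a (-(k + 1)) = paNeg G a k := by
  rw [pa, if_neg (by omega)]
  congr 1

variable {G a}

theorem span_iterSet_le_g (ha : a ∈ G.g (-1)) (n : ℕ) :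
    Submodule.span ℂ (iterSet G a n) ≤ G.g (-1) := by
  induction n with
  | zero => exact (Submodule.span_singleton_le_iff_mem a _).2 ha
  | succ n ih =>
    rw [span_iterSet_succ]
    exact bracketSpan_le_g G le_rfl ih (zero_add _)

theorem paMinusOne_le_g (ha : a ∈ G.g (-1)) : paMinusOne G a ≤ G.g (-1) :=
  (paMinusOne_eq_iSup G a).trans_le (iSup_le (span_iterSet_le_g ha))

theorem paNeg_le_g (ha : a ∈ G.g (-1)) (k : ℕ) : paNeg G a k ≤ G.g (-(k + 1)) := by
  induction k with
  | zero => exact paMinusOne_le_g ha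
  | succ k ih => exact bracketSpan_le_g G (paMinusOne_le_g ha) ih (by omega)

theorem pa_le_g (ha : a ∈ G.g (-1)) (j : ℤ) : pa G a j ≤ G.g j := by
  rcases le_or_gt 0 j with hj | hj
  · exact (pa_of_nonneg G a hj).le
  · obtain ⟨k, rfl⟩ : ∃ k : ℕ, j = -(k + 1) := ⟨(-j - 1).toNat, by omega⟩
    exact (pa_neg_succ G a k).trans_le (paNeg_le_g ha k)

theorem bracketSpan_span_iterSet_le (ha : a ∈ G.g (-1)) (n : ℕ) :
    bracketSpan (Submodule.span ℂ (iterSet G a n)) (G.g 1) ≤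
      bracketSpan (G.g 0) (G.g 0) ⊔ bracketSpan (Submodule.span ℂ {a}) (G.g 1) := by
  induction n with
  | zero => exact le_sup_right
  | succ n ih =>
    rw [span_iterSet_succ]
    refine (bracketSpan_bracketSpan_le _ _ _).trans (sup_le ?_ ?_)
    · have iter_bracket_le : bracketSpan (Submodule.span ℂ (iterSet G a n)) (G.g 1) ≤ G.g 0 :=
        bracketSpan_le_g G (span_iterSet_le_g ha n) le_rfl (neg_add_cancel 1)
      exact le_sup_of_le_left (bracketSpan_mono le_rfl iter_bracket_le)
    · have g_zero_bracket_le : bracketSpan (G.g 0) (G.g 1) ≤ G.g 1 :=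
        bracketSpan_le_g G le_rfl le_rfl (zero_add 1)
      exact (bracketSpan_mono le_rfl g_zero_bracket_le).trans ih

theorem bracketSpan_paMinusOne_le (ha : a ∈ G.g (-1)) :
    bracketSpan (paMinusOne G a) (G.g 1) ≤
      bracketSpan (G.g 0) (G.g 0) ⊔ bracketSpan (Submodule.span ℂ {a}) (G.g 1) := by
  rw [paMinusOne_eq_iSup, bracketSpan_iSup_left]
  exact iSup_le (bracketSpan_span_iterSet_le ha)

theorem bracketSpan_paNeg_le (ha : a ∈ G.g (-1)) (k : ℕ) :
    bracketSpan (paNeg G a k) (G.g (k + 1)) ≤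
      bracketSpan (G.g 0) (G.g 0) ⊔ bracketSpan (Submodule.span ℂ {a}) (G.g 1) := by
  induction k with
  | zero => exact bracketSpan_paMinusOne_le ha
  | succ k ih =>
    refine (bracketSpan_bracketSpan_le _ _ _).trans (sup_le ?_ ?_)
    · have paNeg_bracket_le : bracketSpan (paNeg G a k) (G.g (↑(k + 1) + 1)) ≤ G.g 1 :=
        bracketSpan_le_g G (paNeg_le_g ha k) le_rfl (by omega)
      exact (bracketSpan_mono le_rfl paNeg_bracket_le).trans (bracketSpan_paMinusOne_le ha)
    · have paMinusOne_bracket_le :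
          bracketSpan (paMinusOne G a) (G.g (↑(k + 1) + 1)) ≤ G.g (k + 1) :=
        bracketSpan_le_g G (paMinusOne_le_g ha) le_rfl (by omega)
      exact (bracketSpan_mono le_rfl paMinusOne_bracket_le).trans ih

theorem bracketSpan_pa_neg_le (ha : a ∈ G.g (-1)) (i : ℤ) :
    bracketSpan (pa G a i) (pa G a (-i)) ≤
      bracketSpan (G.g 0) (G.g 0) ⊔ bracketSpan (Submodule.span ℂ {a}) (G.g 1) := by
  wlog hi : i ≤ 0 generalizing i
  · simpa only [neg_neg, bracketSpan_comm] using this (-i) (by omega)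
  rcases hi.eq_or_lt with rfl | hi
  · exact le_sup_left
  · obtain ⟨k, rfl⟩ : ∃ k : ℕ, i = -(k + 1) := ⟨(-i - 1).toNat, by omega⟩
    rw [pa_neg_succ, neg_neg, pa_of_nonneg G a (by omega)]
    exact bracketSpan_paNeg_le ha k

theorem iSup_bracketSpan_pa_neg (ha : a ∈ G.g (-1)) :
    ⨆ i, bracketSpan (pa G a i) (pa G a (-i)) =
      bracketSpan (G.g 0) (G.g 0) ⊔ bracketSpan (Submodule.span ℂ {a}) (G.g 1) := by
  refine le_antisymm (iSup_le (bracketSpan_pa_neg_le ha)) (sup_le ?_ ?_)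
  · exact le_iSup (fun i => bracketSpan (pa G a i) (pa G a (-i))) 0
  · have span_le_pa : Submodule.span ℂ {a} ≤ pa G a (-1) :=
      (Submodule.span_singleton_le_iff_mem a _).2 (mem_paMinusOne_self G a)
    exact le_iSup_of_le (-1) (bracketSpan_mono span_le_pa le_rfl)

end MinimalParabolic

theorem statement4_general (G : GradedLie L) (a : L) (ha : a ∈ G.g (-1)) :
    bracketSpan (⨆ j : ℤ, pa G a j) (⨆ j : ℤ, pa G a j) ⊓ G.g 0 =
      bracketSpan (G.g 0) (G.g 0) ⊔ Submodule.span ℂ {y | ∃ x ∈ G.g 1, y = ⁅a, x⁆} := by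
  rw [bracketSpan_iSup_inf_g G (pa_le_g ha) (pa_le_g ha)]
  simp only [zero_sub]
  rw [iSup_bracketSpan_pa_neg ha, bracketSpan_span_singleton_left]

/-- For `0 ≠ a ∈ g_{-1}`, the intersection of the derived algebra of
`p^a` with `g₀` equals `[a, g₁]`, the span of all brackets `⁅a, x⁆` with `x ∈ g₁`. -/
theorem statement4 (G : GradedLie L) (hP1 : P1 G) (hP2 : P2 G)
    (a : L) (ha : a ∈ G.g (-1)) (ha0 : a ≠ 0) :
    bracketSpan (⨆ j : ℤ, pa G a j) (⨆ j : ℤ, pa G a j) ⊓ G.g 0 =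
      Submodule.span ℂ {y | ∃ x ∈ G.g 1, y = ⁅a, x⁆} := by
  rw [statement4_general G a ha, hP1.bracketSpan_eq_bot, bot_sup_eq]

end Paper
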